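/- arXiv:2208.05118 — 4 statements merged into one kernel-verified Lean document; each statement's English description precedes it below -/
import Mathlib

section
/- The derivative α′ of the function α(x) := 1 + (M_s/x)(coth(γx) − 1/(γx)) satisfies lim_{x→0⁺} α′(x) = 0 and lim_{x→+∞} α′(x) = 0, for fixed parameters M_s > 0, γ > 0. -/
noncomputable def coth (y : ℝ) : ℝ := Real.cosh y / Real.sinh y

noncomputable def alpha (Ms γ x : ℝ) : ℝ := 1 + Ms / x * (coth (γ * x) - 1 / (γ * x))

noncomputable def GG (y : ℝ) : ℝ :=
  (2 * Real.sinh y ^ 2 - y * Real.cosh y * Real.sinh y - y ^ 2) / (y ^ 3 * Real.sinh y ^ 2)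

lemma deriv_alpha_eq (Ms γ x : ℝ) (hγ : 0 < γ) (hx : 0 < x) :
    deriv (alpha Ms γ) x = Ms * γ ^ 2 * GG (γ * x) := by
  have hs : 0 < Real.sinh (γ * x) := Real.sinh_pos_iff.2 (by positivity)
  have hl : HasDerivAt (fun x : ℝ => γ * x) γ x := by
    simpa using (hasDerivAt_id x).const_mul γ
  have h1 := (hl.cosh.div hl.sinh hs.ne').sub
    ((hasDerivAt_const x (1:ℝ)).div hl (by positivity))
  have h2 := (((hasDerivAt_const x Ms).div (hasDerivAt_id x) hx.ne').mul h1).const_add 1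
  have h3 : HasDerivAt (alpha Ms γ) _ x := h2
  rw [h3.deriv]
  unfold GG
  have hc := Real.cosh_sq (γ * x)
  simp only [id, Pi.div_apply, Pi.sub_apply]
  generalize Real.sinh (γ * x) = s at *
  generalize Real.cosh (γ * x) = c at *
  have hs' := hs.ne'
  have hx' := hx.ne'
  have hg' := hγ.ne'
  have e : s * γ * s - c * (c * γ) = -γ := by linear_combination (-γ) * hc
  have e2 : s * (γ * 1) * s - c * (c * (γ * 1)) = -γ := by linear_combination (-γ) * hc
  simp only [mul_comm] at *
  field_simp
  ring_nf
  try simp only [hc]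
  try ring

lemma GG_small (y : ℝ) (h0 : 0 < y) (h1 : y ≤ 1 / 2) : |GG y| ≤ 128 * y := by
  have hs : y ≤ Real.sinh y := Real.self_le_sinh_iff.2 h0.le
  obtain ⟨z, hz⟩ : ∃ z, z = 2 * y := ⟨_, rfl⟩
  have hz0 : 0 < z := by linarith
  have hz1 : |z| ≤ 1 := by rw [abs_of_pos hz0]; linarith
  have a1 := Real.exp_bound hz1 (n := 6) (by norm_num)
  have a2 := Real.exp_bound (x := -z) (by rwa [abs_neg]) (n := 6) (by norm_num)
  have b1 := Real.exp_bound hz1 (n := 5) (by norm_num)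
  have b2 := Real.exp_bound (x := -z) (by rwa [abs_neg]) (n := 5) (by norm_num)
  rw [abs_neg] at a2 b2
  rw [abs_of_pos hz0] at a1 a2 b1 b2
  simp [Finset.sum_range_succ, Nat.factorial] at a1 a2 b1 b2
  rw [abs_le] at a1 a2 b1 b2
  have hc2 : Real.cosh z = 1 + 2 * Real.sinh y ^ 2 := by
    rw [hz, Real.cosh_two_mul, Real.cosh_sq]; ring
  have hs2 : Real.sinh z = 2 * Real.sinh y * Real.cosh y := by
    rw [hz, Real.sinh_two_mul]
  have N : 2 * Real.sinh y ^ 2 - y * Real.cosh y * Real.sinh y - y ^ 2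
      = Real.cosh z - 1 - z * Real.sinh z / 4 - z ^ 2 / 4 := by
    rw [hc2, hs2, hz]; ring
  have p6 : 0 < z ^ 6 := by positivity
  have p5 : 0 < z ^ 5 := by positivity
  have c1 : |Real.cosh z - (1 + z ^ 2 / 2 + z ^ 4 / 24)| ≤ z ^ 6 := by
    rw [Real.cosh_eq, abs_le]; constructor <;> nlinarith
  have d1 : |Real.sinh z - (z + z ^ 3 / 6)| ≤ z ^ 5 := by
    rw [Real.sinh_eq, abs_le]; constructor <;> nlinarith
  have NB : |Real.cosh z - 1 - z * Real.sinh z / 4 - z ^ 2 / 4| ≤ 2 * z ^ 6 := by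
    rw [abs_le] at *
    have u1 := mul_le_mul_of_nonneg_left d1.1 hz0.le
    have u2 := mul_le_mul_of_nonneg_left d1.2 hz0.le
    constructor <;> nlinarith
  unfold GG
  have hsp : 0 < Real.sinh y := by linarith
  rw [N, abs_div, abs_of_pos (a := y ^ 3 * Real.sinh y ^ 2) (by positivity), div_le_iff₀ (by positivity)]
  refine NB.trans ?_
  have : y ^ 2 ≤ Real.sinh y ^ 2 := by gcongr
  calc 2 * z ^ 6 = 128 * y * (y ^ 3 * y ^ 2) := by rw [hz]; ring
    _ ≤ _ := by gcongr

lemma GG_large (y : ℝ) (h1 : 1 ≤ y) : |GG y| ≤ 5 / y := by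
  have h0 : 0 < y := by linarith
  have hs : y ≤ Real.sinh y := Real.self_le_sinh_iff.2 h0.le
  have hc := Real.cosh_sq y
  have hcp := Real.cosh_pos y
  unfold GG
  generalize Real.sinh y = s at *
  generalize Real.cosh y = c at *
  have hsp : 0 < s := by linarith
  have hcs : c ≤ 2 * s := by nlinarith
  rw [abs_div, abs_of_pos (a := y ^ 3 * s ^ 2) (by positivity), div_le_div_iff₀ (by positivity) h0]
  have k1 : y * c * s ≤ y * (2 * s) * s := by gcongr
  have k2 : y ^ 2 ≤ s ^ 2 := by gcongr
  have k3 : 0 < y * c * s := by positivity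
  have k4 : 1 * s ^ 2 ≤ y * s ^ 2 := by gcongr
  have : |2 * s ^ 2 - y * c * s - y ^ 2| ≤ 5 * (y * s ^ 2) := by
    rw [abs_le]; constructor <;> nlinarith
  calc _ ≤ 5 * (y * s ^ 2) * y := by gcongr
    _ = 5 * (y ^ 2 * s ^ 2) := by ring
    _ ≤ _ := by gcongr <;> norm_num

theorem alpha_deriv_limits (Ms γ : ℝ) (hMs : 0 < Ms) (hγ : 0 < γ) :
    Filter.Tendsto (deriv (alpha Ms γ)) (nhdsWithin 0 (Set.Ioi 0)) (nhds 0) ∧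
    Filter.Tendsto (deriv (alpha Ms γ)) Filter.atTop (nhds 0) := by
  have hK : 0 < Ms * γ ^ 2 := by positivity
  constructor
  · apply squeeze_zero_norm' (a := fun x => Ms * γ ^ 2 * (128 * (γ * x)))
    · have : Set.Ioo (0:ℝ) (1 / (2 * γ)) ∈ nhdsWithin (0:ℝ) (Set.Ioi 0) :=
        Ioo_mem_nhdsGT (by positivity)
      filter_upwards [this] with x hx
      rw [deriv_alpha_eq Ms γ x hγ hx.1, Real.norm_eq_abs, abs_mul, abs_of_pos hK]
      have := hx.2
      rw [lt_div_iff₀ (by positivity)] at this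
      have := GG_small (γ * x) (mul_pos hγ hx.1) (by linarith)
      gcongr
    · have : Continuous (fun x : ℝ => Ms * γ ^ 2 * (128 * (γ * x))) := by fun_prop
      have h := this.tendsto 0
      simp only [mul_zero] at h
      exact h.mono_left nhdsWithin_le_nhds
  · apply squeeze_zero_norm' (a := fun x => Ms * γ ^ 2 * (5 / (γ * x)))
    · filter_upwards [Filter.eventually_ge_atTop (1 / γ)] with x hx
      have hx0 : 0 < x := lt_of_lt_of_le (by positivity) hx
      rw [deriv_alpha_eq Ms γ x hγ hx0, Real.norm_eq_abs, abs_mul, abs_of_pos hK]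
      rw [div_le_iff₀ hγ] at hx
      have := GG_large (γ * x) (by linarith)
      gcongr
    · have h := ((Filter.tendsto_id.const_mul_atTop hγ).const_div_atTop (5:ℝ)).const_mul (Ms * γ ^ 2)
      simpa using h
end

section
/- There exists a positive constant C_α such that for all real x > 0, |α′(x)| ≤ C_α, where α(x) := 1 + (M_s/x)(coth(γx) − 1/(γx)) with fixed parameters M_s > 0 and γ > 0 (Lemma 2.1(i), second part). -/
theorem aux_mono (f f' : ℝ → ℝ) (hf : ∀ y, HasDerivAt f (f' y) y) (h0 : f 0 = 0)
    (h : ∀ y, 0 ≤ y → 0 ≤ f' y) : ∀ y, 0 ≤ y → 0 ≤ f y := by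
  intro y hy
  have hm : MonotoneOn f (Set.Ici 0) := by
    apply monotoneOn_of_deriv_nonneg (convex_Ici 0)
    · exact fun z _ => (hf z).continuousAt.continuousWithinAt
    · exact fun z _ => (hf z).differentiableAt.differentiableWithinAt
    · intro z hz
      rw [interior_Ici] at hz
      rw [(hf z).deriv]
      exact h z (le_of_lt hz)
  have := hm (Set.mem_Ici.2 le_rfl) (Set.mem_Ici.2 hy) hy
  rwa [h0] at this

theorem aux1 : ∀ y : ℝ, 0 ≤ y → 0 ≤ y * Real.cosh y - Real.sinh y := by
  apply aux_mono _ (fun y => y * Real.sinh y)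
  · intro y
    refine HasDerivAt.congr_deriv (((hasDerivAt_id y).mul (Real.hasDerivAt_cosh y)).sub (Real.hasDerivAt_sinh y)) ?_
    simp
  · simp
  · intro y hy
    exact mul_nonneg hy (Real.sinh_nonneg_iff.2 hy)

theorem aux2 : ∀ y : ℝ, 0 ≤ y → 0 ≤ (1 + y ^ 2 / 3) * Real.sinh y - y * Real.cosh y := by
  apply aux_mono _ (fun y => y / 3 * (y * Real.cosh y - Real.sinh y))
  · intro y
    refine HasDerivAt.congr_deriv ((((((hasDerivAt_id y).pow 2).div_const 3).const_add 1).mul (Real.hasDerivAt_sinh y)).sub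
      ((hasDerivAt_id y).mul (Real.hasDerivAt_cosh y))) ?_
    simp
    ring
  · simp
  · intro y hy
    exact mul_nonneg (by positivity) (aux1 y hy)

theorem aux3 : ∀ y : ℝ, 0 ≤ y → 0 ≤ (1 + y) * Real.sinh y - y * Real.cosh y := by
  apply aux_mono _ (fun y => Real.sinh y + y * (Real.cosh y - Real.sinh y))
  · intro y
    refine HasDerivAt.congr_deriv ((((hasDerivAt_id y).const_add 1).mul (Real.hasDerivAt_sinh y)).sub
      ((hasDerivAt_id y).mul (Real.hasDerivAt_cosh y))) ?_
    simp [-Real.cosh_sub_sinh]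
    ring
  · simp
  · intro y hy
    have := Real.sinh_lt_cosh y
    have := Real.sinh_nonneg_iff.2 hy
    have : 0 ≤ y * (Real.cosh y - Real.sinh y) := mul_nonneg hy (by linarith)
    linarith

theorem aux4 : ∀ y : ℝ, 0 ≤ y → 0 ≤ Real.cosh y - 1 - y ^ 2 / 2 := by
  apply aux_mono _ (fun y => Real.sinh y - y)
  · intro y
    refine HasDerivAt.congr_deriv (((Real.hasDerivAt_cosh y).sub_const 1).sub (((hasDerivAt_id y).pow 2).div_const 2)) ?_
    simp
  · simp
  · intro y hy
    have := Real.self_le_sinh_iff.2 hy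
    linarith

theorem aux5 : ∀ y : ℝ, 0 ≤ y → 0 ≤ Real.sinh y - y - y ^ 3 / 6 := by
  apply aux_mono _ (fun y => Real.cosh y - 1 - y ^ 2 / 2)
  · intro y
    refine HasDerivAt.congr_deriv (((Real.hasDerivAt_sinh y).sub (hasDerivAt_id y)).sub
      (((hasDerivAt_id y).pow 3).div_const 6)) ?_
    simp
    ring
  · simp
  · exact aux4

theorem aux6 : ∀ y : ℝ, 0 ≤ y → 0 ≤ y * (Real.cosh y ^ 2 + Real.sinh y ^ 2) + 2 * y
    - 3 * (Real.cosh y * Real.sinh y) := by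
  apply aux_mono _ (fun y => 4 * Real.sinh y * (y * Real.cosh y - Real.sinh y))
  · intro y
    refine HasDerivAt.congr_deriv ((((hasDerivAt_id y).mul (((Real.hasDerivAt_cosh y).pow 2).add
      ((Real.hasDerivAt_sinh y).pow 2))).add ((hasDerivAt_id y).const_mul 2)).sub
      (((Real.hasDerivAt_cosh y).mul (Real.hasDerivAt_sinh y)).const_mul 3)) ?_
    simp
    linear_combination (-2:ℝ) * Real.cosh_sq y
  · simp
  · intro y hy
    have := Real.sinh_nonneg_iff.2 hy
    exact mul_nonneg (by positivity) (aux1 y hy)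

theorem aux7 : ∀ y : ℝ, 0 ≤ y → 0 ≤ y * (Real.cosh y * Real.sinh y) + y ^ 2
    - 2 * Real.sinh y ^ 2 := by
  apply aux_mono _ (fun y => y * (Real.cosh y ^ 2 + Real.sinh y ^ 2) + 2 * y
    - 3 * (Real.cosh y * Real.sinh y))
  · intro y
    refine HasDerivAt.congr_deriv ((((hasDerivAt_id y).mul ((Real.hasDerivAt_cosh y).mul (Real.hasDerivAt_sinh y))).add
      ((hasDerivAt_id y).pow 2)).sub (((Real.hasDerivAt_sinh y).pow 2).const_mul 2)) ?_
    simp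
    ring
  · simp
  · exact aux6

theorem aux8 (y : ℝ) (hy : 0 < y) : y * (Real.cosh y * Real.sinh y) + y ^ 2
    - 2 * Real.sinh y ^ 2 ≤ y ^ 3 * Real.sinh y ^ 2 := by
  have h2 := aux2 y hy.le
  have h3 := aux3 y hy.le
  have h5 := aux5 y hy.le
  have hs : 0 < Real.sinh y := Real.sinh_pos_iff.2 hy
  set s := Real.sinh y
  set c := Real.cosh y
  rcases le_total y 1 with h | h
  · have e1 : y * (c * s) ≤ (1 + y ^ 2 / 3) * s ^ 2 := by nlinarith
    have e2 : y ^ 2 * (1 + y ^ 2 / 3) ≤ s ^ 2 := by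
      have : (y + y ^ 3 / 6) ^ 2 ≤ s ^ 2 := by
        apply pow_le_pow_left₀ (by positivity); linarith
      nlinarith [pow_pos hy 6]
    have e3 : y ^ 2 ≤ s ^ 2 * (1 - y ^ 2 / 3 + y ^ 4 / 9) := by
      have : 0 ≤ 1 - y ^ 2 / 3 + y ^ 4 / 9 := by nlinarith [sq_nonneg (y ^ 2 / 3 - 1)]
      have := mul_le_mul_of_nonneg_right e2 this
      nlinarith [pow_pos hy 8]
    have e4 : y ^ 4 / 9 ≤ y ^ 3 := by nlinarith [pow_pos hy 3]
    have := mul_le_mul_of_nonneg_right e4 (sq_nonneg s)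
    linarith
  · have e1 : y * (c * s) ≤ (1 + y) * s ^ 2 := by nlinarith
    have e2 : y ^ 2 ≤ s ^ 2 := by
      apply pow_le_pow_left₀ hy.le; linarith [pow_pos hy 3]
    have e3 : y ≤ y ^ 3 := by nlinarith [mul_le_mul h h zero_le_one hy.le]
    have := mul_le_mul_of_nonneg_right e3 (sq_nonneg s)
    linarith

theorem alpha_deriv_bounded (Ms γ : ℝ) (hMs : 0 < Ms) (hγ : 0 < γ) :
    ∃ Cα : ℝ, 0 < Cα ∧ ∀ x : ℝ, 0 < x → |deriv (alpha Ms γ) x| ≤ Cα := by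
  refine ⟨Ms * γ ^ 2, by positivity, fun x hx => ?_⟩
  have hy : 0 < γ * x := mul_pos hγ hx
  have hs : 0 < Real.sinh (γ * x) := Real.sinh_pos_iff.2 hy
  have hg : HasDerivAt (fun x => γ * x) γ x := by
    simpa using (hasDerivAt_id x).const_mul γ
  have key : HasDerivAt (alpha Ms γ) (-(Ms * γ ^ 2 * ((γ * x * (Real.cosh (γ * x) * Real.sinh (γ * x))
      + (γ * x) ^ 2 - 2 * Real.sinh (γ * x) ^ 2) / ((γ * x) ^ 3 * Real.sinh (γ * x) ^ 2)))) x := by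
    have := (((hasDerivAt_const x Ms).div (hasDerivAt_id x) hx.ne').mul
      (((hg.cosh).div hg.sinh hs.ne').sub
        ((hasDerivAt_const x (1:ℝ)).div hg hy.ne'))).const_add 1
    refine HasDerivAt.congr_deriv (f := alpha Ms γ) this ?_
    have hc := Real.cosh_sq (γ * x)
    simp only [Pi.div_apply, Pi.sub_apply, id]
    set s := Real.sinh (γ * x)
    set c := Real.cosh (γ * x)
    have e : s * γ * s - c * (c * γ) = -γ := by linear_combination (-γ) * hc
    rw [e]
    field_simp
    ring
  rw [key.deriv, abs_neg, abs_of_nonneg]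
  · apply mul_le_of_le_one_right (by positivity)
    rw [div_le_one (by positivity)]
    exact aux8 _ hy
  · exact mul_nonneg (by positivity) (div_nonneg (aux7 _ hy.le) (by positivity))
end

section
/- Let Ω ⊆ ℝ^d be a measurable set (with Lebesgue measure), and let f, g, h : Ω → ℝ^d be measurable functions such that f(x) ≠ 0 and g(x) ≠ 0 for almost every x ∈ Ω, f is essentially bounded with essential supremum ‖f‖_∞, and f − g and h are square integrable on Ω. Let C_α > 0 be a constant such that |α′(x)| ≤ C_α for all x > 0. Then |∫_Ω (α(‖g(x)‖) − α(‖f(x)‖))·(f(x)·h(x)) dx| ≤ C_α·‖f‖_∞·(∫_Ω ‖f−g‖² dx)^{1/2}·(∫_Ω ‖h‖² dx)^{1/2}, where α(x) := 1 + (M_s/x)(coth(γx) − 1/(γx)) with fixed parameters M_s > 0, γ > 0 (the key estimate in the uniqueness proofs of Theorems 2.2 and 3.1, with f, g, h playing the roles of ∇φ, ∇φ̃, ∇τ). -/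
open MeasureTheory

lemma alpha_lip (Ms γ : ℝ) (hγ : 0 < γ) (Cα : ℝ)
    (hbound : ∀ x : ℝ, 0 < x → |deriv (alpha Ms γ) x| ≤ Cα) (a b : ℝ) (ha : 0 < a) (hb : 0 < b) :
    |alpha Ms γ b - alpha Ms γ a| ≤ Cα * |b - a| := by
  have hd : ∀ x ∈ Set.Ioi (0 : ℝ), DifferentiableAt ℝ (alpha Ms γ) x := by
    intro x hx
    have hx : 0 < x := hx
    have hs : Real.sinh (γ * x) ≠ 0 := (Real.sinh_pos_iff.2 (mul_pos hγ hx)).ne'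
    have h1 : γ * x ≠ 0 := (mul_pos hγ hx).ne'
    have h2 : x ≠ 0 := hx.ne'
    have e : alpha Ms γ = fun x => 1 + Ms / x *
        (Real.cosh (γ * x) / Real.sinh (γ * x) - 1 / (γ * x)) := rfl
    rw [e]
    have i1 : DifferentiableAt ℝ (fun x : ℝ => γ * x) x := by fun_prop
    have i2 : DifferentiableAt ℝ (fun x : ℝ => Real.cosh (γ * x)) x := by fun_prop
    have i3 : DifferentiableAt ℝ (fun x : ℝ => Real.sinh (γ * x)) x := by fun_prop
    exact (((differentiableAt_const Ms).div differentiableAt_id h2).mul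
      ((i2.div i3 hs).sub ((differentiableAt_const (1 : ℝ)).div i1 h1))).const_add 1
  have := (convex_Ioi (0 : ℝ)).norm_image_sub_le_of_norm_deriv_le (C := Cα) hd
    (fun x hx => hbound x hx) ha hb
  simpa [Real.norm_eq_abs] using this

theorem uniqueness_key_estimate (d : ℕ) (Ms γ : ℝ) (hMs : 0 < Ms) (hγ : 0 < γ)
    (Ω : Set (EuclideanSpace ℝ (Fin d))) (hΩ : MeasurableSet Ω)
    (f g h : EuclideanSpace ℝ (Fin d) → EuclideanSpace ℝ (Fin d))
    (hf : Measurable f) (hg : Measurable g) (hh : Measurable h)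
    (hfne : ∀ᵐ x ∂(volume.restrict Ω), f x ≠ 0)
    (hgne : ∀ᵐ x ∂(volume.restrict Ω), g x ≠ 0)
    (finf : ℝ) (hfinf : ∀ᵐ x ∂(volume.restrict Ω), ‖f x‖ ≤ finf)
    (hfg : IntegrableOn (fun x => ‖f x - g x‖ ^ 2) Ω)
    (hh2 : IntegrableOn (fun x => ‖h x‖ ^ 2) Ω)
    (Cα : ℝ) (hCα : 0 < Cα)
    (hbound : ∀ x : ℝ, 0 < x → |deriv (alpha Ms γ) x| ≤ Cα) :
    |∫ x in Ω, (alpha Ms γ ‖g x‖ - alpha Ms γ ‖f x‖) * (inner ℝ (f x) (h x) : ℝ)| ≤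
      Cα * finf * Real.sqrt (∫ x in Ω, ‖f x - g x‖ ^ 2) *
        Real.sqrt (∫ x in Ω, ‖h x‖ ^ 2) := by
  rcases eq_or_ne (volume.restrict Ω) 0 with h0 | h0
  · simp [h0]
  have : (ae (volume.restrict Ω)).NeBot := ae_neBot.2 h0
  have hfi : 0 ≤ finf := by
    obtain ⟨x, hx⟩ := hfinf.exists
    exact (norm_nonneg _).trans hx
  have m1 : MemLp (fun x => ‖f x - g x‖) 2 (volume.restrict Ω) :=
    (memLp_two_iff_integrable_sq (hf.sub hg).norm.aestronglyMeasurable).2 hfg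
  have m2 : MemLp (fun x => ‖h x‖) 2 (volume.restrict Ω) :=
    (memLp_two_iff_integrable_sq hh.norm.aestronglyMeasurable).2 hh2
  have hi : Integrable (fun x => ‖f x - g x‖ * ‖h x‖) (volume.restrict Ω) :=
    m1.integrable_mul m2
  have hcs : ∫ x in Ω, ‖f x - g x‖ * ‖h x‖ ≤
      Real.sqrt (∫ x in Ω, ‖f x - g x‖ ^ 2) * Real.sqrt (∫ x in Ω, ‖h x‖ ^ 2) := by
    have := integral_mul_le_Lp_mul_Lq_of_nonneg (μ := volume.restrict Ω)
      (Real.HolderConjugate.two_two)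
      (f := fun x => ‖f x - g x‖) (g := fun x => ‖h x‖)
      (Filter.Eventually.of_forall fun x => norm_nonneg _)
      (Filter.Eventually.of_forall fun x => norm_nonneg _) (by simpa using m1) (by simpa using m2)
    simpa [Real.sqrt_eq_rpow] using this
  have key : ∀ᵐ x ∂(volume.restrict Ω),
      ‖(alpha Ms γ ‖g x‖ - alpha Ms γ ‖f x‖) * (inner ℝ (f x) (h x) : ℝ)‖ ≤
        Cα * finf * (‖f x - g x‖ * ‖h x‖) := by
    filter_upwards [hfne, hgne, hfinf] with x h1 h2 h3
    have l := alpha_lip Ms γ hγ Cα hbound ‖f x‖ ‖g x‖ (norm_pos_iff.2 h1) (norm_pos_iff.2 h2)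
    have l2 : |‖g x‖ - ‖f x‖| ≤ ‖f x - g x‖ := by
      rw [norm_sub_rev]; exact abs_norm_sub_norm_le _ _
    have l3 : |(inner ℝ (f x) (h x) : ℝ)| ≤ finf * ‖h x‖ :=
      (abs_real_inner_le_norm _ _).trans (by gcongr)
    rw [Real.norm_eq_abs, abs_mul]
    calc _ ≤ (Cα * ‖f x - g x‖) * (finf * ‖h x‖) := by
          apply mul_le_mul (l.trans (by gcongr)) l3 (abs_nonneg _) (by positivity)
      _ = _ := by ring
  have := norm_integral_le_of_norm_le (hi.const_mul (Cα * finf)) key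
  rw [integral_const_mul, Real.norm_eq_abs] at this
  refine this.trans ?_
  rw [mul_assoc (Cα * finf)]
  exact mul_le_mul_of_nonneg_left hcs (by positivity)
end

section
/- Fix real parameters M_s > 0 and γ > 0. Let H : ℝ³ → ℝ³ be differentiable at a point x₀ with H(x₀) ≠ 0, and suppose its Jacobian at x₀ is symmetric, i.e. ∂_j H_i(x₀) = ∂_i H_j(x₀) for all i, j (equivalently, curl H(x₀) = 0). Define the Langevin magnetization M(x) := M_s·(coth(γ‖H(x)‖) − 1/(γ‖H(x)‖))·H(x)/‖H(x)‖ (where H(x) ≠ 0) and β(s) := (M_s/γ)·ln(sinh(γs)/s) for s > 0. Then the function x ↦ β(‖H(x)‖) is differentiable at x₀ and, for each i, ∑_{j=1}^{3} M_j(x₀)·∂_j H_i(x₀) = ∂_i(β(‖H‖))(x₀); that is, (M·∇)H at x₀ equals the gradient at x₀ of β(‖H‖) (identity (2.8) of the paper, the Kelvin force as a gradient). -/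
noncomputable def beta (Ms γ s : ℝ) : ℝ := Ms / γ * Real.log (Real.sinh (γ * s) / s)

theorem beta_hasDerivAt_aux (Ms γ s : ℝ) (hγ : 0 < γ) (hs : 0 < s) :
    HasDerivAt (beta Ms γ) (Ms * (coth (γ * s) - 1 / (γ * s))) s := by
  have hsh : 0 < Real.sinh (γ * s) := Real.sinh_pos_iff.2 (mul_pos hγ hs)
  have h1 : HasDerivAt (fun t : ℝ => γ * t) γ s := by
    simpa using (hasDerivAt_id s).const_mul γ
  have h2 := ((h1.sinh.fun_div (hasDerivAt_id' s) hs.ne').log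
    (div_pos hsh hs).ne').const_mul (Ms / γ)
  have h3 : HasDerivAt (beta Ms γ) _ s := h2
  convert h3 using 1
  unfold coth
  field_simp

theorem kelvin_force_as_gradient (Ms γ : ℝ) (hMs : 0 < Ms) (hγ : 0 < γ)
    (H M : EuclideanSpace ℝ (Fin 3) → EuclideanSpace ℝ (Fin 3))
    (x₀ : EuclideanSpace ℝ (Fin 3))
    (hH : DifferentiableAt ℝ H x₀) (hne : H x₀ ≠ 0)
    (hsym : ∀ i j : Fin 3,
      fderiv ℝ H x₀ (EuclideanSpace.single j 1) i =
        fderiv ℝ H x₀ (EuclideanSpace.single i 1) j)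
    (hM : ∀ x, H x ≠ 0 →
      M x = (Ms * (coth (γ * ‖H x‖) - 1 / (γ * ‖H x‖)) / ‖H x‖) • H x) :
    DifferentiableAt ℝ (fun x => beta Ms γ ‖H x‖) x₀ ∧
    ∀ i : Fin 3,
      ∑ j : Fin 3, M x₀ j * fderiv ℝ H x₀ (EuclideanSpace.single j 1) i =
        fderiv ℝ (fun x => beta Ms γ ‖H x‖) x₀ (EuclideanSpace.single i 1) := by
  have hn : 0 < ‖H x₀‖ := norm_pos_iff.2 hne
  have h1 := (hH.hasFDerivAt.norm_sq).sqrt (pow_pos hn 2).ne'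
  have h2 : HasFDerivAt (fun x => ‖H x‖) _ x₀ :=
    h1.congr_of_eventuallyEq (Filter.Eventually.of_forall fun x => by simp)
  have h3 := (beta_hasDerivAt_aux Ms γ ‖H x₀‖ hγ hn).comp_hasFDerivAt x₀ h2
  have h4 : HasFDerivAt (fun x => beta Ms γ ‖H x‖) _ x₀ := h3
  refine ⟨h4.differentiableAt, fun i => ?_⟩
  rw [h4.fderiv, hM x₀ hne]
  simp only [hsym i]
  simp [PiLp.inner_apply, Fin.sum_univ_three]
  field_simp
  try ring
end
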